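/- For every ε > 0 and every y ∈ C_c^∞(ℝ^{2d}), with A_ε y = Δ_v y − v·∇_v y − v·∇_x y + ε Δ_x y one has ∫_{ℝ^d} ∫_{ℝ^d} μ(v) y(x,v) (A_ε y)(x,v) dv dx = − ∫_{ℝ^d} ∫_{ℝ^d} μ(v) ( ‖∇_v y(x,v)‖² + ε ‖∇_x y(x,v)‖² ) dv dx. -/

import Mathlib

open MeasureTheory
open scoped RealInnerProductSpace

noncomputable section

/-- `E d` is Euclidean space `ℝ^d`. -/
abbrev E (d : ℕ) := EuclideanSpace ℝ (Fin d)

/-- The Maxwellian `μ(v) = (2π)^{-d/2} exp(-‖v‖²/2)`. -/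
def maxwellian (d : ℕ) (v : E d) : ℝ :=
  (2 * Real.pi) ^ (-(d : ℝ) / 2) * Real.exp (-‖v‖ ^ 2 / 2)

/-- The weighted `L²_μ` norm `‖y‖_Y`. -/
def Ynorm (d : ℕ) (y : E d × E d → ℝ) : ℝ :=
  (∫ x : E d, ∫ v : E d, maxwellian d v * y (x, v) ^ 2) ^ ((1 : ℝ) / 2)

/-- Membership in `Y`: measurable with finite `‖·‖_Y` norm. -/
def memY (d : ℕ) (y : E d × E d → ℝ) : Prop :=
  Measurable y ∧ Integrable (fun p : E d × E d => maxwellian d p.2 * y p ^ 2)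

/-- `ρ_{μy}(x) = ∫ μ(v) y(x,v) dv`. -/
def rhoMu (d : ℕ) (y : E d × E d → ℝ) (x : E d) : ℝ :=
  ∫ v : E d, maxwellian d v * y (x, v)

/-- `ρ_{μyv}(x) = ∫ v μ(v) y(x,v) dv`. -/
def rhoMuV (d : ℕ) (y : E d × E d → ℝ) (x : E d) : E d :=
  ∫ v : E d, (maxwellian d v * y (x, v)) • v

/-- Gradient in the `v` variable. -/
def gradV (d : ℕ) (y : E d × E d → ℝ) (p : E d × E d) : E d :=
  gradient (fun w => y (p.1, w)) p.2

/-- Gradient in the `x` variable. -/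
def gradX (d : ℕ) (y : E d × E d → ℝ) (p : E d × E d) : E d :=
  gradient (fun w => y (w, p.2)) p.1

/-- The weighted norm of an `ℝ^d`-valued field, `‖F‖_{Y^d}`. -/
def YdNorm (d : ℕ) (F : E d × E d → E d) : ℝ :=
  (∫ x : E d, ∫ v : E d, maxwellian d v * ‖F (x, v)‖ ^ 2) ^ ((1 : ℝ) / 2)

/-- The `V_v = H¹_{μ,v}` norm. -/
def VvNorm (d : ℕ) (y : E d × E d → ℝ) : ℝ :=
  (Ynorm d y ^ 2 + YdNorm d (gradV d y) ^ 2) ^ ((1 : ℝ) / 2)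

/-- The `L²(ℝ^d)` norm of `U`. -/
def UL2norm (d : ℕ) (U : E d → ℝ) : ℝ :=
  (∫ x : E d, U x ^ 2) ^ ((1 : ℝ) / 2)

/-- Laplacian in the `v` variable. -/
def laplacianV (d : ℕ) (y : E d × E d → ℝ) (p : E d × E d) : ℝ :=
  ∑ i : Fin d,
    fderiv ℝ (fun w => fderiv ℝ (fun w' => y (p.1, w')) w (EuclideanSpace.single i 1)) p.2
      (EuclideanSpace.single i 1)

/-- Laplacian in the `x` variable. -/
def laplacianX (d : ℕ) (y : E d × E d → ℝ) (p : E d × E d) : ℝ :=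
  ∑ i : Fin d,
    fderiv ℝ (fun w => fderiv ℝ (fun w' => y (w', p.2)) w (EuclideanSpace.single i 1)) p.1
      (EuclideanSpace.single i 1)

/-- Divergence in the `v` variable of an `ℝ^d`-valued field. -/
def divV (d : ℕ) (F : E d × E d → E d) (p : E d × E d) : ℝ :=
  ∑ i : Fin d,
    fderiv ℝ (fun w => ⟪F (p.1, w), EuclideanSpace.single i 1⟫) p.2
      (EuclideanSpace.single i 1)

/-- The integral of a directional derivative of a compactly supported `C¹` function vanishes. -/
lemma integral_fderiv_eq_zero_of_hasCompactSupport {V : Type*} [NormedAddCommGroup V]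
    [NormedSpace ℝ V] [FiniteDimensional ℝ V] [MeasurableSpace V] [BorelSpace V]
    (ν : Measure V) [ν.IsAddHaarMeasure] {f : V → ℝ} (hf : ContDiff ℝ 1 f)
    (hfc : HasCompactSupport f) (u : V) : ∫ p, fderiv ℝ f p u ∂ν = 0 := by
  have hcont : Continuous fun p => fderiv ℝ f p u :=
    (hf.continuous_fderiv one_ne_zero).clm_apply continuous_const
  have hint : Integrable (fun p => fderiv ℝ f p u) ν :=
    hcont.integrable_of_hasCompactSupport (hfc.fderiv_apply (𝕜 := ℝ) u)
  have hfi : Integrable f ν := hf.continuous.integrable_of_hasCompactSupport hfc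
  have h := integral_mul_fderiv_eq_neg_fderiv_mul_of_integrable (μ := ν) (v := u)
    (f := fun _ : V => (1 : ℝ)) (g := f) (by simp) (by simpa using hint) (by simpa using hfi)
    (fun _ _ => differentiableAt_const _) (fun x _ => hf.differentiable one_ne_zero x)
  simpa using h

lemma fderiv_slice_right {V W : Type*} [NormedAddCommGroup V] [NormedSpace ℝ V]
    [NormedAddCommGroup W] [NormedSpace ℝ W] {f : V × W → ℝ} (hf : Differentiable ℝ f)
    (x : V) (v e : W) : fderiv ℝ (fun w => f (x, w)) v e = fderiv ℝ f (x, v) (0, e) := by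
  have h := (hf (x, v)).hasFDerivAt.comp v (hasFDerivAt_prodMk_right (𝕜 := ℝ) x v)
  exact congrArg (fun L : W →L[ℝ] ℝ => L e) h.fderiv

lemma fderiv_slice_left {V W : Type*} [NormedAddCommGroup V] [NormedSpace ℝ V]
    [NormedAddCommGroup W] [NormedSpace ℝ W] {f : V × W → ℝ} (hf : Differentiable ℝ f)
    (x e : V) (v : W) : fderiv ℝ (fun w => f (w, v)) x e = fderiv ℝ f (x, v) (e, 0) := by
  have h := (hf (x, v)).hasFDerivAt.comp x (hasFDerivAt_prodMk_left (𝕜 := ℝ) x v)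
  exact congrArg (fun L : V →L[ℝ] ℝ => L e) h.fderiv

lemma gradient_apply_eq_fderiv {d : ℕ} (f : E d → ℝ) (v : E d) (i : Fin d) :
    gradient f v i = fderiv ℝ f v (EuclideanSpace.single i 1) := by
  have h : ⟪gradient f v, EuclideanSpace.single i (1 : ℝ)⟫ =
      fderiv ℝ f v (EuclideanSpace.single i 1) := by
    rw [gradient, InnerProductSpace.toDual_symm_apply]
  rw [← h, EuclideanSpace.inner_single_right]
  simp

section Phase

variable {d : ℕ} {y : E d × E d → ℝ}

lemma gradV_apply (hy : Differentiable ℝ y) (p : E d × E d) (i : Fin d) :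
    gradV d y p i = fderiv ℝ y p (0, EuclideanSpace.single i 1) := by
  rw [gradV, gradient_apply_eq_fderiv, fderiv_slice_right hy]

lemma gradX_apply (hy : Differentiable ℝ y) (p : E d × E d) (i : Fin d) :
    gradX d y p i = fderiv ℝ y p (EuclideanSpace.single i 1, 0) := by
  rw [gradX, gradient_apply_eq_fderiv, fderiv_slice_left hy]

lemma differentiable_fderiv_apply (hy : ContDiff ℝ 2 y) (u : E d × E d) :
    Differentiable ℝ fun p => fderiv ℝ y p u :=
  ((hy.fderiv_right (m := 1) (by norm_num)).clm_apply contDiff_const).differentiable one_ne_zero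

lemma laplacianV_eq_sum (hy : ContDiff ℝ 2 y) (p : E d × E d) :
    laplacianV d y p = ∑ i, fderiv ℝ (fun q => fderiv ℝ y q (0, EuclideanSpace.single i 1)) p
      (0, EuclideanSpace.single i 1) := by
  simp only [laplacianV, fderiv_slice_right (hy.differentiable two_ne_zero),
    fderiv_slice_right (differentiable_fderiv_apply hy _)]

lemma laplacianX_eq_sum (hy : ContDiff ℝ 2 y) (p : E d × E d) :
    laplacianX d y p = ∑ i, fderiv ℝ (fun q => fderiv ℝ y q (EuclideanSpace.single i 1, 0)) p
      (EuclideanSpace.single i 1, 0) := by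
  simp only [laplacianX, fderiv_slice_left (hy.differentiable two_ne_zero),
    fderiv_slice_left (differentiable_fderiv_apply hy _)]

end Phase

lemma contDiff_maxwellian (d : ℕ) {n : WithTop ℕ∞} : ContDiff ℝ n (maxwellian d) :=
  contDiff_const.mul (((contDiff_id.norm_sq ℝ).neg.div_const 2).exp)

lemma hasFDerivAt_maxwellian {d : ℕ} (v : E d) :
    HasFDerivAt (maxwellian d) (-maxwellian d v • innerSL ℝ v) v := by
  have h := (((((hasStrictFDerivAt_norm_sq v).hasFDerivAt).neg).mul_const (1 / 2 : ℝ)).exp).const_mul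
    ((2 * Real.pi) ^ (-(d : ℝ) / 2))
  have hfun : maxwellian d = fun w => (2 * Real.pi) ^ (-(d : ℝ) / 2) *
      Real.exp (-‖w‖ ^ 2 * (1 / 2)) := by
    ext w
    simp [maxwellian, div_eq_mul_inv]
  rw [hfun]
  refine h.congr_fderiv ?_
  ext w
  simp
  ring

lemma fderiv_maxwellian_snd_mul {d : ℕ} {f : E d × E d → ℝ} (hf : Differentiable ℝ f)
    (p u : E d × E d) :
    fderiv ℝ (fun q => maxwellian d q.2 * f q) p u =
      maxwellian d p.2 * (fderiv ℝ f p u - ⟪p.2, u.2⟫ * f p) := by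
  have hm : HasFDerivAt (fun q : E d × E d => maxwellian d q.2) _ p :=
    (hasFDerivAt_maxwellian p.2).comp p hasFDerivAt_snd
  rw [(hm.fun_mul (hf p).hasFDerivAt).fderiv]
  simp
  ring

/-- Gaussian integration by parts on phase space. -/
lemma integral_maxwellian_mul_fderiv_sub_inner {d : ℕ} {f : E d × E d → ℝ}
    (hf : ContDiff ℝ 1 f) (hfc : HasCompactSupport f) (u : E d × E d) :
    ∫ p : E d × E d, maxwellian d p.2 * (fderiv ℝ f p u - ⟪p.2, u.2⟫ * f p) = 0 := by
  simp_rw [← fderiv_maxwellian_snd_mul (hf.differentiable one_ne_zero)]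
  rw [Measure.volume_eq_prod]
  exact integral_fderiv_eq_zero_of_hasCompactSupport _
    (((contDiff_maxwellian d).comp contDiff_snd).mul hf) hfc.mul_left u

lemma integrable_maxwellian_mul {d : ℕ} {f : E d × E d → ℝ} (hf : Continuous f)
    (hfc : HasCompactSupport f) : Integrable fun p : E d × E d => maxwellian d p.2 * f p := by
  rw [Measure.volume_eq_prod]
  exact (((contDiff_maxwellian d (n := 0)).continuous.comp continuous_snd).mul
    hf).integrable_of_hasCompactSupport hfc.mul_left

/-- Gaussian integration by parts for the second derivative in the direction `u`. -/
lemma integral_maxwellian_mul_second_fderiv {d : ℕ} {y : E d × E d → ℝ}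
    (hy : ContDiff ℝ 2 y) (hyc : HasCompactSupport y) (u : E d × E d) :
    ∫ p : E d × E d, maxwellian d p.2 *
      (fderiv ℝ y p u ^ 2 + y p * fderiv ℝ (fun q => fderiv ℝ y q u) p u
        - ⟪p.2, u.2⟫ * (y p * fderiv ℝ y p u)) = 0 := by
  have hD : ContDiff ℝ 1 fun q => fderiv ℝ y q u :=
    (hy.fderiv_right (m := 1) (by norm_num)).clm_apply contDiff_const
  have hy1 : ContDiff ℝ 1 y := hy.of_le (by norm_num)
  rw [← integral_maxwellian_mul_fderiv_sub_inner (hy1.mul hD) hyc.mul_right u]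
  refine integral_congr_ae (.of_forall fun p => ?_)
  have h := ((hy1.differentiable one_ne_zero p).hasFDerivAt.fun_mul
    (hD.differentiable one_ne_zero p).hasFDerivAt).fderiv
  simp only [h, add_apply, smul_apply, smul_eq_mul]
  ring

/-- The transport term is skew-symmetric for the Maxwellian weight. -/
lemma integral_maxwellian_mul_transport {d : ℕ} {y : E d × E d → ℝ}
    (hy : ContDiff ℝ 1 y) (hyc : HasCompactSupport y) (i : Fin d) :
    ∫ p : E d × E d, maxwellian d p.2 *
      (p.2 i * (y p * fderiv ℝ y p (EuclideanSpace.single i 1, 0))) = 0 := by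
  have hc : ContDiff ℝ 1 fun p : E d × E d => p.2 i := by fun_prop
  have h := integral_maxwellian_mul_fderiv_sub_inner (hc.mul (hy.pow 2))
    ((hyc.comp_left (g := fun t : ℝ => t ^ 2) (by simp)).mul_left)
    (EuclideanSpace.single i 1, 0)
  have key : ∀ p : E d × E d, maxwellian d p.2 *
      (p.2 i * (y p * fderiv ℝ y p (EuclideanSpace.single i 1, 0))) =
      (1 / 2) * (maxwellian d p.2 * (fderiv ℝ (fun p => p.2 i * y p ^ 2) p
        (EuclideanSpace.single i 1, 0) -
        ⟪p.2, (EuclideanSpace.single i (1 : ℝ), (0 : E d)).2⟫ * (p.2 i * y p ^ 2))) := by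
    intro p
    have hci : HasFDerivAt (fun p : E d × E d => p.2 i)
        ((EuclideanSpace.proj i : E d →L[ℝ] ℝ).comp (ContinuousLinearMap.snd ℝ (E d) (E d))) p :=
      ((EuclideanSpace.proj i : E d →L[ℝ] ℝ).comp
        (ContinuousLinearMap.snd ℝ (E d) (E d))).hasFDerivAt
    rw [(hci.fun_mul ((hy.differentiable one_ne_zero p).hasFDerivAt.pow 2)).fderiv]
    simp
    ring
  simp_rw [key]
  rw [integral_const_mul]
  simpa using h

/-- For every `ε > 0` and `y ∈ C_c^∞(ℝ^{2d})`, with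
`A_ε y = Δ_v y − v·∇_v y − v·∇_x y + ε Δ_x y`, one has
`⟨A_ε y, y⟩_Y = −∫∫ μ (‖∇_v y‖² + ε ‖∇_x y‖²)`. -/
theorem statement9 (d : ℕ) (hd : 1 ≤ d) (ε : ℝ) (hε : 0 < ε)
    (y : E d × E d → ℝ) (hy : ContDiff ℝ (⊤ : ℕ∞) y) (hyc : HasCompactSupport y)
    (Aε : E d × E d → ℝ)
    (hAε : ∀ p : E d × E d,
      Aε p = laplacianV d y p - ⟪p.2, gradV d y p⟫ - ⟪p.2, gradX d y p⟫ +
        ε * laplacianX d y p) :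
    (∫ x : E d, ∫ v : E d, maxwellian d v * y (x, v) * Aε (x, v)) =
      -∫ x : E d, ∫ v : E d, maxwellian d v *
        (‖gradV d y (x, v)‖ ^ 2 + ε * ‖gradX d y (x, v)‖ ^ 2) := by
  have hy2 : ContDiff ℝ 2 y := contDiff_infty.1 hy 2
  have hy1 : ContDiff ℝ 1 y := hy2.of_le (by norm_num)
  have hyd : Differentiable ℝ y := hy2.differentiable two_ne_zero
  set eV : Fin d → E d × E d := fun i => (0, EuclideanSpace.single i 1) with heV
  set eX : Fin d → E d × E d := fun i => (EuclideanSpace.single i 1, 0) with heX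
  have cD (u : E d × E d) : Continuous fun p => fderiv ℝ y p u :=
    (hy1.continuous_fderiv one_ne_zero).clm_apply continuous_const
  have sD (u : E d × E d) : HasCompactSupport fun p => fderiv ℝ y p u :=
    hyc.fderiv_apply (𝕜 := ℝ) u
  have cDD (u : E d × E d) : Continuous fun p => fderiv ℝ (fun q => fderiv ℝ y q u) p u :=
    (((hy2.fderiv_right (m := 1) (by norm_num)).clm_apply
      contDiff_const).continuous_fderiv one_ne_zero).clm_apply continuous_const
  have cy := hy.continuous
  have hA (p : E d × E d) : Aε p = ∑ i, (fderiv ℝ (fun q => fderiv ℝ y q (eV i)) p (eV i)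
      - p.2 i * fderiv ℝ y p (eV i) - p.2 i * fderiv ℝ y p (eX i)
      + ε * fderiv ℝ (fun q => fderiv ℝ y q (eX i)) p (eX i)) := by
    rw [hAε, laplacianV_eq_sum hy2, laplacianX_eq_sum hy2, PiLp.inner_apply, PiLp.inner_apply]
    simp only [gradV_apply hyd, gradX_apply hyd, Finset.sum_add_distrib, Finset.sum_sub_distrib,
      Finset.mul_sum, heV, heX]
    simp [mul_comm]
  have hG (p : E d × E d) : ‖gradV d y p‖ ^ 2 + ε * ‖gradX d y p‖ ^ 2 =
      ∑ i, (fderiv ℝ y p (eV i) ^ 2 + ε * fderiv ℝ y p (eX i) ^ 2) := by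
    simp only [EuclideanSpace.real_norm_sq_eq, gradV_apply hyd, gradX_apply hyd,
      Finset.sum_add_distrib, Finset.mul_sum, heV, heX]
  have cA : Continuous Aε := by
    rw [funext hA]
    fun_prop
  have iL : Integrable fun p : E d × E d => maxwellian d p.2 * (y p * Aε p) :=
    integrable_maxwellian_mul (cy.mul cA) hyc.mul_right
  have sq (u : E d × E d) : Integrable fun p : E d × E d =>
      maxwellian d p.2 * fderiv ℝ y p u ^ 2 :=
    integrable_maxwellian_mul ((cD u).pow 2) ((sD u).comp_left (g := fun t : ℝ => t ^ 2) (by simp))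
  have iR : Integrable fun p : E d × E d => maxwellian d p.2 *
      (‖gradV d y p‖ ^ 2 + ε * ‖gradX d y p‖ ^ 2) := by
    simp only [hG, Finset.mul_sum, mul_add, mul_left_comm _ ε]
    exact integrable_finsetSum _ fun i _ => (sq _).add ((sq _).const_mul ε)
  have i2 (u : E d × E d) : Integrable fun p : E d × E d => maxwellian d p.2 *
      (fderiv ℝ y p u ^ 2 + y p * fderiv ℝ (fun q => fderiv ℝ y q u) p u
        - ⟪p.2, u.2⟫ * (y p * fderiv ℝ y p u)) := by
    refine integrable_maxwellian_mul (by fun_prop) ?_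
    exact (((sD u).comp_left (g := fun t : ℝ => t ^ 2) (by simp)).add hyc.mul_right).sub
      (hyc.mul_right.mul_left)
  have iT (i : Fin d) : Integrable fun p : E d × E d => maxwellian d p.2 *
      (p.2 i * (y p * fderiv ℝ y p (eX i))) :=
    integrable_maxwellian_mul (by fun_prop) (hyc.mul_right.mul_left)
  have split (p : E d × E d) : maxwellian d p.2 * (y p * Aε p) + maxwellian d p.2 *
      (‖gradV d y p‖ ^ 2 + ε * ‖gradX d y p‖ ^ 2) =
      ∑ i, (maxwellian d p.2 * (fderiv ℝ y p (eV i) ^ 2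
          + y p * fderiv ℝ (fun q => fderiv ℝ y q (eV i)) p (eV i)
          - ⟪p.2, (eV i).2⟫ * (y p * fderiv ℝ y p (eV i)))
        + ε * (maxwellian d p.2 * (fderiv ℝ y p (eX i) ^ 2
          + y p * fderiv ℝ (fun q => fderiv ℝ y q (eX i)) p (eX i)
          - ⟪p.2, (eX i).2⟫ * (y p * fderiv ℝ y p (eX i))))
        - maxwellian d p.2 * (p.2 i * (y p * fderiv ℝ y p (eX i)))) := by
    rw [hA, hG, Finset.mul_sum, Finset.mul_sum, Finset.mul_sum, ← Finset.sum_add_distrib]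
    refine Finset.sum_congr rfl fun i _ => ?_
    have h1 : ⟪p.2, (eV i).2⟫ = p.2 i := by simp [heV, EuclideanSpace.inner_single_right]
    have h2 : ⟪p.2, (eX i).2⟫ = 0 := by simp [heX]
    rw [h1, h2]
    ring
  have total : (∫ p : E d × E d, maxwellian d p.2 * (y p * Aε p)) +
      ∫ p : E d × E d, maxwellian d p.2 * (‖gradV d y p‖ ^ 2 + ε * ‖gradX d y p‖ ^ 2) = 0 := by
    rw [← integral_add iL iR]
    simp_rw [split]
    rw [integral_finsetSum _ fun i _ => by
      exact ((i2 (eV i)).add ((i2 (eX i)).const_mul ε)).sub (iT i)]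
    refine Finset.sum_eq_zero fun i _ => ?_
    rw [integral_sub (by exact (i2 (eV i)).add ((i2 (eX i)).const_mul ε)) (iT i),
      integral_add (i2 _) ((i2 _).const_mul ε), integral_const_mul,
      integral_maxwellian_mul_second_fderiv hy2 hyc, integral_maxwellian_mul_second_fderiv hy2 hyc,
      integral_maxwellian_mul_transport hy1 hyc]
    simp
  have fubiniL := integral_prod _ iL
  have fubiniR := integral_prod _ iR
  simp_rw [mul_assoc]
  rw [← fubiniL, ← fubiniR]
  exact eq_neg_of_add_eq_zero_left total
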